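/- Let μ : S¹ → S³ ⊂ ℝ⁴ be a continuous map whose image {μ(ψ) : ψ ∈ S¹} is not contained in any proper linear subspace of ℝ⁴ (equivalently, span{μ(ψ) : ψ ∈ S¹} = ℝ⁴). Then the subgroup H of O(4) generated by the reflections {I − 2 μ(ψ)⊗μ(ψ) : ψ ∈ S¹} acts transitively on S³: for all x, y ∈ S³ there exists g ∈ H with g x = y. -/

import Mathlib

/-!
Let `H` be the group generated by the reflections and `D` the set of unit vectors whose reflection
lies in `H`. Since `H` is a group, `D` is stable under the reflections across the hyperplanes
orthogonal to its own members (`ReflClosed`, `reflClosed_of_subgroup`). Two distinct unit vectors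
`x, y` are exchanged by the reflection in the direction `x - y`, so it suffices that `D` contains
every unit vector. This is deduced, in any finite-dimensional inner product space, from the fact
that `D` contains a nontrivial spanning continuum `C`, here the image of `μ`
(`ReflClosed.sphere_subset`).

The main step is that `D` contains a great circle (`ReflClosed.exists_circle`). Fix `u` in `C` and
write `R_c` for the reflection in `c`. By boundary bumping, `C` has arbitrarily small nontrivial
subcontinua through `u`. If `v` is a point of such a small continuum, iterating the small rotation
`R_v R_u` and joining consecutive steps gives a continuum `Y` in `D` which stays close to the great
circle through `u` and `v` and runs from `u` almost to `-u`. As `v` tends to `u` (along a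
subsequence) these great circles converge to the one in a plane `span(u, e)`. Let `X` be a
subcontinuum of `C` near `u`.

* If every point of `X` is in this plane or orthogonal to `e`, then `X` contains an arc of the limit
  circle, by the intermediate value theorem for the height `⟪e, x⟫`. An arc generates the whole
  circle.
* If some `a` in `X` is neither, consider `⟪u, R_c y⟫` for `(c, y)` in `X × Y`. It has opposite signs
  on the two slices where `y` is `u` and where `y` is almost `-u`. Hence its zero set contains a
  continuum joining the fibre over `c = u` to the fibre over `c = a` (`exists_zero_continuum`).
  The image of the latter under `(c, y) ↦ R_c y` is a continuum in `D ∩ u^⊥`. It is nontrivial,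
  because `R_a` maps no unit vector of the plane orthogonal to `u` into the plane, hence, for `Y`
  close enough to the plane, no point of `Y` orthogonal to `u` into `Y`. So the dimension drops
  and induction applies.

Finally, let `V` be a maximal subspace, containing the plane of a great circle found above, whose
unit sphere lies in `D`. If `C` were not contained in `V`, then by connectedness and spanning some
point of `C` would be neither in `V` nor orthogonal to `V`, and `V` could be enlarged
(`ReflClosed.sphere_sup_span`). So `V` is the whole space.
-/

open Matrix

/-- The reflection matrix `I − 2u⊗u`. -/
noncomputable def reflMat {n : ℕ} (u : Fin n → ℝ) : Matrix (Fin n) (Fin n) ℝ :=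
  1 - (2 : ℝ) • vecMulVec u u

/-! ### Continua -/

section Topo

/-- In a compact Hausdorff space, closed sets meeting no common connected component are separated by
a clopen set, since components are intersections of clopen sets. -/
theorem exists_clopen_separation {X : Type*} [TopologicalSpace X] [CompactSpace X] [T2Space X]
    {A B : Set X} (hA : IsClosed A) (hB : IsClosed B)
    (h : ∀ x ∈ A, ∀ y ∈ B, y ∉ connectedComponent x) :
    ∃ U : Set X, IsClopen U ∧ A ⊆ U ∧ Disjoint U B := by
  have key : ∀ x ∈ A, ∃ U : Set X, IsClopen U ∧ x ∈ U ∧ Disjoint U B := by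
    intro x hx
    by_contra hcon
    push Not at hcon
    have hne : (⋂ s : { s : Set X // IsClopen s ∧ x ∈ s }, ((s : Set X) ∩ B)).Nonempty := by
      have : Nonempty { s : Set X // IsClopen s ∧ x ∈ s } := ⟨⟨Set.univ, isClopen_univ, trivial⟩⟩
      apply IsCompact.nonempty_iInter_of_directed_nonempty_isCompact_isClosed
      · intro s t
        refine ⟨⟨s.1 ∩ t.1, s.2.1.inter t.2.1, s.2.2, t.2.2⟩, ?_, ?_⟩
        · exact fun z hz => ⟨hz.1.1, hz.2⟩
        · exact fun z hz => ⟨hz.1.2, hz.2⟩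
      · intro s
        exact Set.not_disjoint_iff_nonempty_inter.1 (hcon s.1 s.2.1 s.2.2)
      · exact fun s => (s.2.1.isClosed.inter hB).isCompact
      · exact fun s => s.2.1.isClosed.inter hB
    obtain ⟨y, hy⟩ := hne
    rw [Set.mem_iInter] at hy
    refine h x hx y (hy ⟨Set.univ, isClopen_univ, trivial⟩).2 ?_
    rw [connectedComponent_eq_iInter_isClopen, Set.mem_iInter]
    exact fun s => (hy s).1
  choose! U hU hxU hUB using key
  obtain ⟨t, ht⟩ := hA.isCompact.elim_finite_subcover (fun x : A => U x)
    (fun x => (hU x x.2).isOpen) (fun x hx => Set.mem_iUnion.2 ⟨⟨x, hx⟩, hxU x hx⟩)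
  refine ⟨⋃ x ∈ t, U x, ?_, ht, ?_⟩
  · exact t.finite_toSet.isClopen_biUnion (fun x _ => hU x x.2)
  · simp only [Set.disjoint_iUnion_left]
    exact fun x _ => hUB x x.2

/-- A continuum which leaves the ball of radius `r` around its point `u` has a subcontinuum inside the
closed ball joining `u` to the bounding sphere. -/
theorem boundary_bumping {M : Type*} [MetricSpace M] {C : Set M} (hC : IsCompact C)
    (hconn : IsPreconnected C) {u : M} (hu : u ∈ C) {r : ℝ} (hr : 0 < r)
    (hz : ∃ z ∈ C, r ≤ dist z u) :
    ∃ K ⊆ C, IsCompact K ∧ IsPreconnected K ∧ u ∈ K ∧ K ⊆ Metric.closedBall u r ∧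
      ∃ v ∈ K, dist v u = r := by
  set S : Set M := C ∩ Metric.closedBall u r with hS
  have hScomp : IsCompact S := hC.inter_right Metric.isClosed_closedBall
  have : CompactSpace S := isCompact_iff_compactSpace.1 hScomp
  have huS : u ∈ S := ⟨hu, Metric.mem_closedBall_self hr.le⟩
  by_cases hex : ∃ v ∈ connectedComponent (⟨u, huS⟩ : S), dist (v : M) u = r
  · obtain ⟨v, hv, hvr⟩ := hex
    refine ⟨Subtype.val '' connectedComponent (⟨u, huS⟩ : S), ?_, ?_, ?_, ?_, ?_, v, ⟨v, hv, rfl⟩, hvr⟩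
    · rintro _ ⟨x, -, rfl⟩; exact x.2.1
    · exact isClosed_connectedComponent.isCompact.image continuous_subtype_val
    · exact isPreconnected_connectedComponent.image _ continuous_subtype_val.continuousOn
    · exact ⟨_, mem_connectedComponent, rfl⟩
    · rintro _ ⟨x, -, rfl⟩; exact x.2.2
  · exfalso
    push Not at hex
    obtain ⟨U, hU, huU, hUB⟩ := exists_clopen_separation (X := S) (A := {⟨u, huS⟩})
      (B := {x : S | dist (x : M) u = r}) isClosed_singleton
      (isClosed_eq (by fun_prop) continuous_const)
      (by rintro x rfl y hy hyc; exact hex y hyc hy)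
    have h1 : IsCompact (Subtype.val '' U) := hU.isClosed.isCompact.image continuous_subtype_val
    have h2 : IsCompact (Subtype.val '' Uᶜ) :=
      hU.compl.isClosed.isCompact.image continuous_subtype_val
    have h3 : IsClosed {x : M | r ≤ dist x u} := isClosed_le continuous_const (by fun_prop)
    obtain ⟨z, hzC, hzr⟩ := hz
    obtain ⟨w, hwC, ⟨x, hxU, rfl⟩, hw2⟩ := isPreconnected_closed_iff.1 hconn _ _ h1.isClosed
      (h2.isClosed.union h3) (by
        intro x hx
        by_cases hxr : r ≤ dist x u
        · exact Or.inr (Or.inr hxr)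
        · have hxS : x ∈ S := ⟨hx, (not_le.1 hxr).le⟩
          by_cases hxU : (⟨x, hxS⟩ : S) ∈ U
          · exact Or.inl ⟨_, hxU, rfl⟩
          · exact Or.inr (Or.inl ⟨_, hxU, rfl⟩))
      ⟨u, hu, _, huU rfl, rfl⟩ ⟨z, hzC, Or.inr hzr⟩
    rcases hw2 with ⟨y, hy, hyx⟩ | hw2
    · exact hy (Subtype.ext hyx ▸ hxU)
    · exact Set.disjoint_left.1 hUB hxU (le_antisymm x.2.2 hw2)

/-- A function on a product of two continua `X × Y` which is positive on one horizontal slice and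
negative on another vanishes on a continuum joining any two given vertical fibres. Otherwise
the zero set splits into a clopen part over `a` and one over `b`, and the number mod 2 of sign
changes of `f` near the first part, counted along chains from `y₀` to `y₁` in the fibre
over `x`, would be locally constant in `x`, equal to `1` over `a` and to `0` over `b`. -/
theorem exists_zero_continuum {X Y : Type*} [MetricSpace X] [MetricSpace Y] [CompactSpace X]
    [CompactSpace Y] [PreconnectedSpace X] [PreconnectedSpace Y] (f : X × Y → ℝ)
    (hf : Continuous f) (y₀ y₁ : Y) (h₀ : ∀ x, 0 < f (x, y₀)) (h₁ : ∀ x, f (x, y₁) < 0)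
    (a b : X) :
    ∃ K : Set (X × Y), IsCompact K ∧ IsPreconnected K ∧ (∀ p ∈ K, f p = 0) ∧
      (∃ p ∈ K, p.1 = a) ∧ ∃ p ∈ K, p.1 = b := by
  classical
  set Z : Set (X × Y) := {p | f p = 0} with hZ
  have hZcl : IsClosed Z := isClosed_eq hf continuous_const
  have : CompactSpace Z := isCompact_iff_compactSpace.1 hZcl.isCompact
  by_cases hex : ∃ p q : Z, p.1.1 = a ∧ q.1.1 = b ∧ q ∈ connectedComponent p
  · obtain ⟨p, q, hp, hq, hpq⟩ := hex
    refine ⟨Subtype.val '' connectedComponent p, ?_, ?_, ?_, ?_, ?_⟩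
    · exact isClosed_connectedComponent.isCompact.image continuous_subtype_val
    · exact isPreconnected_connectedComponent.image _ continuous_subtype_val.continuousOn
    · rintro _ ⟨x, -, rfl⟩; exact x.2
    · exact ⟨p, ⟨p, mem_connectedComponent, rfl⟩, hp⟩
    · exact ⟨q, ⟨q, hpq, rfl⟩, hq⟩
  exfalso
  push Not at hex
  have hfib : ∀ c : X, IsClosed {p : X × Y | p.1 = c} := fun c =>
    isClosed_eq continuous_fst continuous_const
  obtain ⟨U, hU, haU, hUb⟩ := exists_clopen_separation (X := Z) (A := {p : Z | p.1.1 = a})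
    (B := {p : Z | p.1.1 = b}) ((hfib a).preimage continuous_subtype_val)
    ((hfib b).preimage continuous_subtype_val) (fun p hp q hq => hex p q hp hq)
  have h1 : IsCompact (Subtype.val '' U) := hU.isClosed.isCompact.image continuous_subtype_val
  have h2 : IsCompact (Subtype.val '' Uᶜ) :=
    hU.compl.isClosed.isCompact.image continuous_subtype_val
  have hdisj : Disjoint (Subtype.val '' U) (Subtype.val '' Uᶜ) :=
    (Set.disjoint_image_iff Subtype.val_injective).2 disjoint_compl_right
  obtain ⟨N₁, N₂, hN₁, hN₂, hUN₁, hUN₂, hN⟩ := SeparatedNhds.of_isCompact_isCompact h1 h2 hdisj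
  set O₁ : Set (X × Y) := N₁ \ {p | p.1 = b} with hO₁
  set O₂ : Set (X × Y) := N₂ \ {p | p.1 = a} with hO₂
  have hO₁open : IsOpen O₁ := hN₁.sdiff (hfib b)
  have hO₂open : IsOpen O₂ := hN₂.sdiff (hfib a)
  -- on `δ`-balls the sign of `f` changes near at most one of the two pieces of the zero set
  obtain ⟨δ, hδ, hleb⟩ := lebesgue_number_lemma_of_metric_sUnion (s := (Set.univ : Set (X × Y)))
    (c := {{p | 0 < f p}, {p | f p < 0}, O₁, O₂}) isCompact_univ (by
      rintro t (rfl | rfl | rfl | rfl)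
      · exact isOpen_lt continuous_const hf
      · exact isOpen_lt hf continuous_const
      · exact hO₁open
      · exact hO₂open) (by
      intro p _
      rcases lt_trichotomy (f p) 0 with h | h | h
      · exact ⟨_, Or.inr (Or.inl rfl), h⟩
      · by_cases hpU : (⟨p, h⟩ : Z) ∈ U
        · exact ⟨O₁, Or.inr (Or.inr (Or.inl rfl)), hUN₁ ⟨_, hpU, rfl⟩,
            fun hb => Set.disjoint_left.1 hUb hpU hb⟩
        · exact ⟨O₂, Or.inr (Or.inr (Or.inr rfl)), hUN₂ ⟨_, hpU, rfl⟩,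
            fun ha => hpU (haU ha)⟩
      · exact ⟨_, Or.inl rfl, h⟩)
  -- `s` records the sign of `f`, and `L` the neighbourhood of the first piece
  set s : X → Y → ZMod 2 := fun x y => if 0 < f (x, y) then 1 else 0 with hs
  set L : X → Y → ZMod 2 := fun x y => if (x, y) ∈ O₁ then 1 else 0 with hL
  have hball : ∀ p q r : X × Y, dist q p < δ → dist r p < δ → s q.1 q.2 ≠ s r.1 r.2 →
      Metric.ball p δ ⊆ O₁ ∨ Metric.ball p δ ⊆ O₂ := by
    intro p q r hq hr hne
    obtain ⟨t, ht, hpt⟩ := hleb p trivial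
    rcases ht with rfl | rfl | rfl | rfl
    · have e1 : 0 < f q := hpt hq
      have e2 : 0 < f r := hpt hr
      simp [hs, e1, e2] at hne
    · have e1 : ¬ 0 < f q := not_lt.2 (le_of_lt (hpt hq))
      have e2 : ¬ 0 < f r := not_lt.2 (le_of_lt (hpt hr))
      simp [hs, e1, e2] at hne
    · exact Or.inl hpt
    · exact Or.inr hpt
  have hLeq : ∀ p q r : X × Y, dist q p < δ → dist r p < δ → s q.1 q.2 ≠ s r.1 r.2 →
      ∃ l, ∀ z : X × Y, dist z p < δ → L z.1 z.2 = l := by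
    intro p q r hq hr hne
    rcases hball p q r hq hr hne with h | h
    · exact ⟨1, fun z hz => if_pos (h hz)⟩
    · exact ⟨0, fun z hz => if_neg fun hz1 => Set.disjoint_left.1 hN hz1.1 (h hz).1⟩
  have hd : ∀ x x' : X, ∀ y y' : Y, dist x' x < δ → dist y' y < δ →
      dist ((x', y') : X × Y) (x, y) < δ := by
    intro x x' y y' hxx hyy
    rw [Prod.dist_eq]; exact max_lt hxx hyy
  -- `N x` counts mod 2 the sign changes near the first piece of the zero set along a chain
  -- in the fibre over `x` from `y₀` to `y`. All such changes are near that piece over `a`, and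
  -- none over `b`.
  set P : Y → Prop := fun y => ∃ N : X → ZMod 2,
    (∀ x x', dist x' x < δ → N x' - N x = L x y * (s x' y - s x y)) ∧
    N a = s a y - s a y₀ ∧ N b = 0 with hP
  have hP0 : P y₀ := by
    refine ⟨fun _ => 0, ?_, ?_, rfl⟩
    · intro x x' _; simp [hs, h₀]
    · simp
  have hstep : ∀ y y', dist y' y < δ → P y → P y' := by
    rintro y y' hyy ⟨N, hN1, hNa, hNb⟩
    refine ⟨fun x => N x + L x y * (s x y' - s x y), ?_, ?_, ?_⟩
    · intro x x' hxx
      have hself : dist x x < δ := by simpa using hδ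
      have hselfy : dist y y < δ := by simpa using hδ
      have c00 := hd x x y y hself hselfy
      have c10 := hd x x' y y hxx hselfy
      have c01 := hd x x y y' hself hyy
      have c11 := hd x x' y y' hxx hyy
      have e := hN1 x x' hxx
      by_cases hall : s x y = s x' y ∧ s x y = s x y' ∧ s x y = s x' y'
      · obtain ⟨e1, e2, e3⟩ := hall
        rw [← e1, sub_self, mul_zero] at e
        simp only [← e1, ← e2, ← e3, sub_self, mul_zero, add_zero, e]
      · obtain ⟨l, hl⟩ : ∃ l, ∀ z : X × Y, dist z (x, y) < δ → L z.1 z.2 = l := by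
          by_cases e1 : s x y = s x' y
          · by_cases e2 : s x y = s x y'
            · have e3 : s x y ≠ s x' y' := fun e3 => hall ⟨e1, e2, e3⟩
              exact hLeq (x, y) (x, y) (x', y') c00 c11 e3
            · exact hLeq (x, y) (x, y) (x, y') c00 c01 e2
          · exact hLeq (x, y) (x, y) (x', y) c00 c10 e1
        have l00 : L x y = l := hl _ c00
        have l10 : L x' y = l := hl _ c10
        have l01 : L x y' = l := hl _ c01
        rw [l00] at e
        simp only [l00, l10, l01]
        linear_combination e
    · simp only [hNa]
      by_cases e : s a y = s a y'
      · simp [e]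
      · have : L a y = 1 := by
          rcases hball (a, y) (a, y) (a, y') (by simpa using hδ)
            (hd a a y y' (by simpa using hδ) hyy) e with h | h
          · exact if_pos (h (Metric.mem_ball_self hδ))
          · exact absurd rfl (h (Metric.mem_ball_self hδ)).2
        rw [this]; ring
    · simp only [hNb]
      have : L b y = 0 := if_neg fun h => h.2 rfl
      simp [this]
  have hPall : ∀ y, P y := by
    have hclopen : IsClopen {y | P y} := by
      refine ⟨⟨?_⟩, ?_⟩
      · refine Metric.isOpen_iff.2 fun y hy => ⟨δ, hδ, fun y' hy' hPy' => hy ?_⟩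
        exact hstep y' y (by rw [dist_comm]; exact hy') hPy'
      · exact Metric.isOpen_iff.2 fun y hy => ⟨δ, hδ, fun y' hy' => hstep y y' hy' hy⟩
    have := hclopen.eq_univ ⟨y₀, hP0⟩
    exact Set.eq_univ_iff_forall.1 this
  obtain ⟨N, hN1, hNa, hNb⟩ := hPall y₁
  have hs1 : ∀ x, s x y₁ = 0 := fun x => if_neg (not_lt.2 (h₁ x).le)
  have hs0 : ∀ x, s x y₀ = 1 := fun x => if_pos (h₀ x)
  have hconst : IsLocallyConstant N := by
    refine (IsLocallyConstant.iff_exists_open N).2 fun x => ?_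
    refine ⟨Metric.ball x δ, Metric.isOpen_ball, Metric.mem_ball_self hδ, fun x' hx' => ?_⟩
    have := hN1 x x' hx'
    rw [hs1, hs1, sub_self, mul_zero] at this
    exact sub_eq_zero.1 this
  have hab := hconst.apply_eq_of_isPreconnected isPreconnected_univ (Set.mem_univ a) (Set.mem_univ b)
  rw [hNa, hNb, hs1, hs0] at hab
  exact absurd hab (by decide)

end Topo

/-! ### Sets of unit vectors stable under their own reflections -/

section Geometry

open scoped RealInnerProductSpace

variable {E : Type*} [NormedAddCommGroup E] [InnerProductSpace ℝ E]

/-- For a unit vector `u`, the reflection of `x` across the hyperplane `u^⊥`. -/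
noncomputable def hypRefl (u x : E) : E := x - (2 * ⟪u, x⟫) • u

/-- A set of unit vectors which is stable under the reflections across the hyperplanes orthogonal
to its own members, such as the set of all unit vectors whose reflection lies in a given group. -/
structure ReflClosed (D : Set E) : Prop where
  unit : ∀ u ∈ D, ‖u‖ = 1
  refl : ∀ u ∈ D, ∀ v ∈ D, hypRefl u v ∈ D

theorem inner_hypRefl_left (u x y : E) : ⟪hypRefl u x, y⟫ = ⟪x, hypRefl u y⟫ := by
  simp only [hypRefl, inner_sub_left, inner_sub_right, inner_smul_left, inner_smul_right,
    real_inner_comm u x, RCLike.conj_to_real]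
  ring

theorem hypRefl_hypRefl {u : E} (hu : ‖u‖ = 1) (x : E) : hypRefl u (hypRefl u x) = x := by
  have huu : ⟪u, u⟫ = 1 := by rw [real_inner_self_eq_norm_sq, hu]; norm_num
  simp only [hypRefl, inner_sub_right, inner_smul_right, huu]
  module

theorem norm_hypRefl {u : E} (hu : ‖u‖ = 1) (x : E) : ‖hypRefl u x‖ = ‖x‖ := by
  have h : ⟪hypRefl u x, hypRefl u x⟫ = ⟪x, x⟫ := by
    rw [inner_hypRefl_left, hypRefl_hypRefl hu]
  rw [real_inner_self_eq_norm_sq, real_inner_self_eq_norm_sq] at h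
  exact (sq_eq_sq₀ (norm_nonneg _) (norm_nonneg _)).1 h

theorem hypRefl_sub (u x y : E) : hypRefl u (x - y) = hypRefl u x - hypRefl u y := by
  simp only [hypRefl, inner_sub_right]; module

theorem hypRefl_self {u : E} (hu : ‖u‖ = 1) : hypRefl u u = -u := by
  have huu : ⟪u, u⟫ = 1 := by rw [real_inner_self_eq_norm_sq, hu]; norm_num
  simp only [hypRefl, huu]; module

theorem continuous_hypRefl : Continuous fun p : E × E => hypRefl p.1 p.2 := by
  unfold hypRefl; fun_prop

/-- The reflection exchanging two given vectors of equal length. -/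
theorem hypRefl_sub_normalized {x y : E} (hxy : ‖x‖ = ‖y‖) (hne : x ≠ y) :
    hypRefl (‖x - y‖⁻¹ • (x - y)) x = y := by
  have h0 : ‖x - y‖ ≠ 0 := norm_ne_zero_iff.2 (sub_ne_zero.2 hne)
  have h1 : ‖x - y‖ ^ 2 = 2 * ⟪x - y, x⟫ := by
    rw [← real_inner_self_eq_norm_sq]
    have e1 : ⟪x, x⟫ = ⟪y, y⟫ := by rw [real_inner_self_eq_norm_sq, real_inner_self_eq_norm_sq, hxy]
    simp only [inner_sub_left, inner_sub_right, real_inner_comm x y]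
    linarith
  have h2 : 2 * (‖x - y‖⁻¹ * ⟪x - y, x⟫) * ‖x - y‖⁻¹ = 1 := by
    field_simp; linarith
  rw [hypRefl, inner_smul_left, smul_smul, RCLike.conj_to_real, h2]
  simp

theorem ReflClosed.neg_mem {D : Set E} (hD : ReflClosed D) {x : E} (hx : x ∈ D) : -x ∈ D :=
  hypRefl_self (hD.unit x hx) ▸ hD.refl x hx x hx

/-- The point at angle `φ` on the great circle through the orthonormal pair `u, e`. -/
noncomputable def circ (u e : E) (φ : ℝ) : E := Real.cos φ • u + Real.sin φ • e

theorem inner_circ {u e : E} (hu : ‖u‖ = 1) (he : ‖e‖ = 1) (hue : ⟪u, e⟫ = 0) (α β : ℝ) :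
    ⟪circ u e α, circ u e β⟫ = Real.cos (α - β) := by
  have huu : ⟪u, u⟫ = 1 := by rw [real_inner_self_eq_norm_sq, hu]; norm_num
  have hee : ⟪e, e⟫ = 1 := by rw [real_inner_self_eq_norm_sq, he]; norm_num
  have heu : ⟪e, u⟫ = 0 := by rw [real_inner_comm, hue]
  simp only [circ, inner_add_left, inner_add_right, inner_smul_left, inner_smul_right,
    RCLike.conj_to_real, huu, hee, hue, heu, Real.cos_sub]
  ring

theorem hypRefl_circ {u e : E} (hu : ‖u‖ = 1) (he : ‖e‖ = 1) (hue : ⟪u, e⟫ = 0) (α β : ℝ) :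
    hypRefl (circ u e α) (circ u e β) = -circ u e (2 * α - β) := by
  rw [hypRefl, inner_circ hu he hue]
  have e1 : 2 * α - β = α + (α - β) := by ring
  have e2 : β = α - (α - β) := by ring
  have hc : Real.cos β - 2 * Real.cos (α - β) * Real.cos α = -Real.cos (2 * α - β) := by
    rw [e1, Real.cos_add]
    conv_lhs => rw [e2, Real.cos_sub]
    rw [← e2]; ring
  have hs : Real.sin β - 2 * Real.cos (α - β) * Real.sin α = -Real.sin (2 * α - β) := by
    rw [e1, Real.sin_add]
    conv_lhs => rw [e2, Real.sin_sub]
    rw [← e2]; ring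
  calc circ u e β - (2 * Real.cos (α - β)) • circ u e α
      = (Real.cos β - 2 * Real.cos (α - β) * Real.cos α) • u
        + (Real.sin β - 2 * Real.cos (α - β) * Real.sin α) • e := by
        simp only [circ]; module
    _ = _ := by rw [hc, hs]; simp only [circ]; module

theorem circ_zero (u e : E) : circ u e 0 = u := by simp [circ]

/-- The angles occurring in `D` are stable under `(α, β) ↦ 2α - β`, and such a set of reals
containing `0` and an interval is everything. -/
theorem ReflClosed.circ_mem_of_arc {D : Set E} (hD : ReflClosed D) {u e : E} (huD : u ∈ D)
    (he : ‖e‖ = 1) (hue : ⟪u, e⟫ = 0) {a b : ℝ} (hab : a < b)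
    (h : ∀ φ ∈ Set.Ioo a b, circ u e φ ∈ D) (φ : ℝ) : circ u e φ ∈ D := by
  have hu := hD.unit u huD
  have hr : ∀ α β, circ u e α ∈ D → circ u e β ∈ D → circ u e (2 * α - β) ∈ D := by
    intro α β hα hβ
    have := hD.neg_mem (hD.refl _ hα _ hβ)
    rwa [hypRefl_circ hu he hue, neg_neg] at this
  have h0 : circ u e 0 ∈ D := by rwa [circ_zero]
  have hm : circ u e (2 * ((a + b) / 2) - 0) ∈ D :=
    hr _ _ (h _ ⟨by linarith, by linarith⟩) h0
  have hsmall : ∀ t, |t| < b - a → circ u e t ∈ D := by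
    intro t ht
    rw [abs_lt] at ht
    have := hr ((a + b) / 2 + t / 2) _ (h _ ⟨by linarith, by linarith⟩) hm
    convert this using 2
    ring
  have hdouble : ∀ (k : ℕ) t, |t| < 2 ^ k * (b - a) → circ u e t ∈ D := by
    intro k
    induction k with
    | zero => intro t ht; exact hsmall t (by simpa using ht)
    | succ k ih =>
      intro t ht
      have := hr (t / 2) 0 (ih _ (by
        rw [abs_div, abs_two]; rw [pow_succ] at ht; linarith)) h0
      convert this using 2
      ring
  obtain ⟨k, hk⟩ := pow_unbounded_of_one_lt (|φ| / (b - a)) (one_lt_two)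
  exact hdouble k φ (by rwa [div_lt_iff₀ (by linarith)] at hk)

/-- The same criterion in terms of the height `τ = sin φ` over `u`. -/
theorem ReflClosed.circ_mem_of_heights {D : Set E} (hD : ReflClosed D) {u e : E} (huD : u ∈ D)
    (he : ‖e‖ = 1) (hue : ⟪u, e⟫ = 0) {s t : ℝ} (hst : s < t) (hs : -1 ≤ s) (ht : t ≤ 1)
    (h : ∀ τ ∈ Set.Ioo s t, √(1 - τ ^ 2) • u + τ • e ∈ D) (φ : ℝ) : circ u e φ ∈ D := by
  refine hD.circ_mem_of_arc huD he hue
    (Real.strictMonoOn_arcsin ⟨hs, by linarith⟩ ⟨by linarith, ht⟩ hst) ?_ φ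
  intro ψ hψ
  have h1 : -(Real.pi / 2) ≤ ψ := (Real.neg_pi_div_two_le_arcsin s).trans hψ.1.le
  have h2 : ψ ≤ Real.pi / 2 := hψ.2.le.trans (Real.arcsin_le_pi_div_two t)
  have hsin := h (Real.sin ψ) ⟨by
    rw [← Real.sin_arcsin hs (by linarith)]
    exact Real.strictMonoOn_sin ⟨Real.neg_pi_div_two_le_arcsin s, hψ.1.le.trans h2⟩ ⟨h1, h2⟩ hψ.1, by
    rw [← Real.sin_arcsin (by linarith) ht]
    exact Real.strictMonoOn_sin ⟨h1, h2⟩ ⟨h1.trans hψ.2.le, Real.arcsin_le_pi_div_two t⟩ hψ.2⟩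
  rwa [← Real.cos_eq_sqrt_one_sub_sin_sq h1 h2] at hsin

/-! ### A great circle in the set -/

/-- Products of the two reflections in the nearby members `u, v` of the small connected set `K`
rotate the great circle through `u` and `v` in small steps, and `K` fills the gaps between
consecutive steps by small connected subsets of `D`. The result is a continuum in `D` which
follows this great circle from `u` almost to `-u` with an error of order `δ`. -/
theorem ReflClosed.exists_continuum_near_circle {D : Set E} (hD : ReflClosed D) {K : Set E}
    (hKD : K ⊆ D) (hK : IsCompact K) (hKc : IsPreconnected K) {u v : E} (hu : u ∈ K) (hv : v ∈ K)
    {δ : ℝ} (hδ : 0 < δ) (hδ' : δ ≤ 1 / 8) (hKδ : K ⊆ Metric.closedBall u δ)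
    (hvδ : dist v u = δ) :
    ∃ e : E, ‖e‖ = 1 ∧ ⟪u, e⟫ = 0 ∧ (∃ c s : ℝ, 0 < s ∧ v = c • u + s • e) ∧
      ∃ Y ⊆ D, IsCompact Y ∧ IsPreconnected Y ∧ u ∈ Y ∧ (∃ y ∈ Y, ‖y + u‖ ≤ 1 / 4) ∧
        ∀ y ∈ Y, ∃ φ, ‖y - circ u e φ‖ ≤ 2 * δ := by
  have hnu := hD.unit u (hKD hu)
  have hnv := hD.unit v (hKD hv)
  have huu : ⟪u, u⟫ = 1 := by rw [real_inner_self_eq_norm_sq, hnu]; norm_num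
  have hvv : ⟪v, v⟫ = 1 := by rw [real_inner_self_eq_norm_sq, hnv]; norm_num
  have hdist : ∀ x : E, ‖x‖ = 1 → ‖x - u‖ ^ 2 = 2 - 2 * ⟪u, x⟫ := by
    intro x hx
    rw [norm_sub_sq_real, hx, hnu, real_inner_comm]; ring
  have huv : ⟪u, v⟫ = 1 - δ ^ 2 / 2 := by
    have := hdist v hnv
    rw [← dist_eq_norm, hvδ] at this
    linarith
  set θ := Real.arccos ⟪u, v⟫ with hθ
  have hcos : Real.cos θ = ⟪u, v⟫ := Real.cos_arccos (by rw [huv]; nlinarith) (by rw [huv]; nlinarith)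
  have hθ2 : θ ≤ Real.pi / 2 := Real.arccos_le_pi_div_two.2 (by rw [huv]; nlinarith)
  have hθ0 : 0 < θ := Real.arccos_pos.2 (by rw [huv]; nlinarith)
  have hsin : 0 < Real.sin θ := Real.sin_pos_of_pos_of_lt_pi hθ0 (by linarith [Real.pi_pos])
  set w := v - ⟪u, v⟫ • u with hw
  have hwsq : ‖w‖ ^ 2 = Real.sin θ ^ 2 := by
    rw [← real_inner_self_eq_norm_sq, Real.sin_sq, hcos]
    simp only [hw, inner_sub_left, inner_sub_right, inner_smul_left, inner_smul_right,
      RCLike.conj_to_real, huu, hvv, real_inner_comm u v]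
    ring
  have hwn : ‖w‖ = Real.sin θ := (sq_eq_sq₀ (norm_nonneg _) hsin.le).1 hwsq
  set e := (Real.sin θ)⁻¹ • w with he
  have hne : ‖e‖ = 1 := by
    rw [he, norm_smul, hwn, norm_inv, Real.norm_of_nonneg hsin.le, inv_mul_cancel₀ hsin.ne']
  have hue : ⟪u, e⟫ = 0 := by
    rw [he, inner_smul_right, hw, inner_sub_right, inner_smul_right, huu]; ring
  have hve : v = circ u e θ := by
    rw [circ, he, smul_smul, mul_inv_cancel₀ hsin.ne', one_smul, hw, hcos]; module
  refine ⟨e, hne, hue, ⟨Real.cos θ, Real.sin θ, hsin, hve⟩, ?_⟩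
  -- the rotation by the angle `2θ` from `u` towards `v`
  set G : E → E := fun x => hypRefl v (hypRefl u x) with hG
  have hGcont : Continuous G :=
    continuous_hypRefl.comp (continuous_const.prodMk
      (continuous_hypRefl.comp (continuous_const.prodMk continuous_id)))
  have hGcirc : ∀ φ, G (circ u e φ) = circ u e (φ + 2 * θ) := by
    intro φ
    have h1 : hypRefl u (circ u e φ) = -circ u e (-φ) := by
      have := hypRefl_circ hnu hne hue 0 φ
      rwa [circ_zero, mul_zero, zero_sub] at this
    have h2 : ∀ x, hypRefl v (-x) = -hypRefl v x := by
      intro x; simp only [hypRefl, inner_neg_right]; module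
    simp only [hG]
    rw [h1, h2]
    conv_lhs => rw [hve]
    rw [hypRefl_circ hnu hne hue, neg_neg]
    congr 1; ring
  have hGnorm : ∀ x y, ‖G x - G y‖ = ‖x - y‖ := by
    intro x y
    simp only [hG]
    rw [← hypRefl_sub, ← hypRefl_sub, norm_hypRefl hnv, norm_hypRefl hnu]
  -- a small continuum in `D` joining `u` to `G u`
  set Y₀ : Set E := (fun c => -hypRefl c u) '' K with hY₀
  have hY₀cont : Continuous fun c : E => -hypRefl c u :=
    (continuous_hypRefl.comp (continuous_id.prodMk continuous_const)).neg
  have hY₀D : Y₀ ⊆ D := by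
    rintro _ ⟨c, hc, rfl⟩
    exact hD.neg_mem (hD.refl _ (hKD hc) _ (hKD hu))
  have huY₀ : u ∈ Y₀ := ⟨u, hu, by simp only [hypRefl_self hnu, neg_neg]⟩
  have hGu : G u = -hypRefl v u := by
    simp only [hG, hypRefl_self hnu]
    simp only [hypRefl, inner_neg_right]; module
  have hGuY₀ : G u ∈ Y₀ := ⟨v, hv, hGu.symm⟩
  have hY₀near : ∀ y ∈ Y₀, ‖y - u‖ ≤ 2 * δ := by
    rintro _ ⟨c, hc, rfl⟩
    have hnc := hD.unit c (hKD hc)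
    have hcc : ⟪c, c⟫ = 1 := by rw [real_inner_self_eq_norm_sq, hnc]; norm_num
    have h1 : ‖c - u‖ ≤ δ := by rw [← dist_eq_norm]; exact hKδ hc
    have h2 := hdist c hnc
    have h3 : ‖-hypRefl c u - u‖ ^ 2 = 4 * (1 - ⟪u, c⟫ ^ 2) := by
      rw [← real_inner_self_eq_norm_sq]
      simp only [hypRefl, inner_sub_left, inner_sub_right, inner_smul_left, inner_smul_right,
        inner_neg_left, inner_neg_right, RCLike.conj_to_real, huu, hcc, real_inner_comm u c]
      ring
    refine abs_le_of_sq_le_sq' ?_ (by positivity) |>.2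
    rw [h3]
    have h4 : ‖c - u‖ ^ 2 ≤ δ ^ 2 := by gcongr
    nlinarith [sq_nonneg (1 - ⟪u, c⟫)]
  have hchain : ∀ M : ℕ, ∃ Y ⊆ D, IsCompact Y ∧ IsPreconnected Y ∧ u ∈ Y ∧
      circ u e (M * (2 * θ)) ∈ Y ∧ ∀ y ∈ Y, ∃ φ, ‖y - circ u e φ‖ ≤ 2 * δ := by
    intro M
    induction M with
    | zero =>
      refine ⟨{u}, by simpa using hKD hu, isCompact_singleton, isPreconnected_singleton, rfl,
        by simp [circ_zero], ?_⟩
      rintro y rfl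
      exact ⟨0, by rw [circ_zero]; simp [hδ.le]⟩
    | succ M ih =>
      obtain ⟨Y, hYD, hYc, hYp, huY, hMY, hYn⟩ := ih
      refine ⟨Y₀ ∪ G '' Y, ?_, (hK.image hY₀cont).union (hYc.image hGcont), ?_, Or.inl huY₀,
        Or.inr ⟨_, hMY, ?_⟩, ?_⟩
      · rintro x (hx | ⟨y, hy, rfl⟩)
        · exact hY₀D hx
        · exact hD.refl _ (hKD hv) _ (hD.refl _ (hKD hu) _ (hYD hy))
      · exact IsPreconnected.union (G u) hGuY₀ ⟨u, huY, rfl⟩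
          (hKc.image _ hY₀cont.continuousOn) (hYp.image _ hGcont.continuousOn)
      · rw [hGcirc]; congr 1; push_cast; ring
      · rintro x (hx | ⟨y, hy, rfl⟩)
        · exact ⟨0, by rw [circ_zero]; exact hY₀near x hx⟩
        · obtain ⟨φ, hφ⟩ := hYn y hy
          exact ⟨φ + 2 * θ, by rw [← hGcirc, hGnorm]; exact hφ⟩
  -- the number of steps of angle `2θ` that fit into a half turn
  obtain ⟨Y, hYD, hYc, hYp, huY, hMY, hYn⟩ := hchain ⌊Real.pi / (2 * θ)⌋₊
  refine ⟨Y, hYD, hYc, hYp, huY, ⟨_, hMY, ?_⟩, hYn⟩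
  set M := ⌊Real.pi / (2 * θ)⌋₊ with hM
  have hM1 : M * (2 * θ) ≤ Real.pi :=
    (le_div_iff₀ (by positivity)).1 (Nat.floor_le (by positivity))
  have hM2 : Real.pi < (M + 1) * (2 * θ) :=
    (div_lt_iff₀ (by positivity)).1 (Nat.lt_floor_add_one _)
  have h1 : Real.cos (M * (2 * θ)) ≤ -Real.cos (2 * θ) := by
    have : Real.cos (2 * θ) ≤ Real.cos (Real.pi - M * (2 * θ)) :=
      Real.cos_le_cos_of_nonneg_of_le_pi (by linarith) (by linarith) (by linarith)
    rw [Real.cos_pi_sub] at this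
    linarith
  have h2 : ‖circ u e (M * (2 * θ)) + u‖ ^ 2 = 2 + 2 * Real.cos (M * (2 * θ)) := by
    have e1 : ‖circ u e (M * (2 * θ))‖ ^ 2 = 1 := by
      rw [← real_inner_self_eq_norm_sq, inner_circ hnu hne hue]; simp
    have e2 : ⟪circ u e (M * (2 * θ)), u⟫ = Real.cos (M * (2 * θ)) := by
      have := inner_circ hnu hne hue (M * (2 * θ)) 0
      rwa [circ_zero, sub_zero] at this
    rw [norm_add_sq_real, e1, e2, hnu]; ring
  rw [Real.cos_two_mul, hcos, huv] at h1
  refine abs_le_of_sq_le_sq' ?_ (by positivity) |>.2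
  rw [h2]
  nlinarith [sq_nonneg δ, sq_nonneg (δ ^ 2)]

/-- Either some great circle lies in `D`, or the problem descends to the members of `D` orthogonal
to one of them. -/
theorem ReflClosed.circle_or_descent [FiniteDimensional ℝ E] {D : Set E} (hD : ReflClosed D)
    {C : Set E} (hCD : C ⊆ D) (hC : IsCompact C) (hCc : IsPreconnected C) (hCn : C.Nontrivial) :
    (∃ u e : E, u ∈ D ∧ ‖e‖ = 1 ∧ ⟪u, e⟫ = 0 ∧ ∀ φ, circ u e φ ∈ D) ∨
    ∃ u ∈ D, ∃ C' ⊆ D, IsCompact C' ∧ IsPreconnected C' ∧ C'.Nontrivial ∧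
      ∀ x ∈ C', ⟪u, x⟫ = 0 := by
  obtain ⟨u, huC, z, hzC, huz⟩ := hCn
  have hnu := hD.unit u (hCD huC)
  have huu : ⟪u, u⟫ = 1 := by rw [real_inner_self_eq_norm_sq, hnu]; norm_num
  set r := min (1 / 8) (dist z u) with hr
  have hr0 : 0 < r := lt_min (by norm_num) (dist_pos.2 huz.symm)
  have hr8 : r ≤ 1 / 8 := min_le_left _ _
  obtain ⟨X, hXC, hXcomp, hXc, huX, hXr, x₁, hx₁X, hx₁⟩ :=
    boundary_bumping hC hCc huC hr0 ⟨z, hzC, min_le_right _ _⟩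
  have hXD := hXC.trans hCD
  have hXu : ∀ c ∈ X, 7 / 8 ≤ ⟪u, c⟫ := by
    intro c hc
    have h1 : ‖c - u‖ ≤ 1 / 8 := by rw [← dist_eq_norm]; exact (hXr hc).trans hr8
    have h2 : ‖c - u‖ ^ 2 = 2 - 2 * ⟪u, c⟫ := by
      rw [norm_sub_sq_real, hD.unit c (hXD hc), hnu, real_inner_comm]; ring
    nlinarith [norm_nonneg (c - u)]
  have hseq : ∀ n : ℕ, ∃ v ∈ X, ∃ e : E, ‖e‖ = 1 ∧ ⟪u, e⟫ = 0 ∧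
      (∃ c s : ℝ, 0 < s ∧ v = c • u + s • e) ∧
      ∃ Y ⊆ D, IsCompact Y ∧ IsPreconnected Y ∧ u ∈ Y ∧ (∃ y ∈ Y, ‖y + u‖ ≤ 1 / 4) ∧
        ∀ y ∈ Y, ∃ φ, ‖y - circ u e φ‖ ≤ 2 * (r * (1 / ((n : ℝ) + 1))) := by
    intro n
    have hp : 0 < 1 / ((n : ℝ) + 1) := by positivity
    have hp1 : 1 / ((n : ℝ) + 1) ≤ 1 := by
      rw [div_le_one (by positivity)]; linarith [n.cast_nonneg (α := ℝ)]
    have hle : r * (1 / ((n : ℝ) + 1)) ≤ r := mul_le_of_le_one_right hr0.le hp1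
    obtain ⟨K, hKX, hK, hKc, huK, hKb, v, hvK, hv⟩ :=
      boundary_bumping hXcomp hXc huX (mul_pos hr0 hp) ⟨x₁, hx₁X, hx₁ ▸ hle⟩
    exact ⟨v, hKX hvK, hD.exists_continuum_near_circle (hKX.trans hXD) hK hKc huK hvK
      (mul_pos hr0 hp) (hle.trans hr8) hKb hv⟩
  choose v hvX e' he' hue' hv Y hYD hYcomp hYc huY hYneg hYn using hseq
  obtain ⟨e, he, ψ, hψ, hlim⟩ := (isCompact_sphere (0 : E) 1).tendsto_subseq
    (x := e') (fun n => by simpa using he' n)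
  have hne : ‖e‖ = 1 := by simpa using he
  have hee : ⟪e, e⟫ = 1 := by rw [real_inner_self_eq_norm_sq, hne]; norm_num
  have hue : ⟪u, e⟫ = 0 := by
    have h1 : Filter.Tendsto (fun n => ⟪u, (e' ∘ ψ) n⟫) Filter.atTop (nhds ⟪u, e⟫) :=
      tendsto_const_nhds.inner (𝕜 := ℝ) hlim
    refine tendsto_nhds_unique h1 ?_
    simp [hue']
  by_cases hcase : ∃ a ∈ X, ⟪e, a⟫ ≠ 0 ∧ a ≠ ⟪u, a⟫ • u + ⟪e, a⟫ • e
  · obtain ⟨a, haX, hea, hapl⟩ := hcase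
    have hna := hD.unit a (hXD haX)
    right
    -- no unit `y` orthogonal to `u` is in the limit plane together with `hypRefl a y`
    obtain ⟨n, hn⟩ : ∃ n, ∀ y ∈ Y n, ⟪u, y⟫ = 0 → hypRefl a y ∉ Y n := by
      by_contra hcon
      push Not at hcon
      choose y hyY huy hay using fun n => hcon (ψ n)
      obtain ⟨y', hy', χ, hχ, hlimy⟩ := (isCompact_sphere (0 : E) 1).tendsto_subseq
        (x := y) (fun n => by simpa using hD.unit _ (hYD _ (hyY n)))
      have hlime : Filter.Tendsto (fun n => e' (ψ (χ n))) Filter.atTop (nhds e) :=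
        hlim.comp hχ.tendsto_atTop
      have hrad : Filter.Tendsto (fun n => 2 * (r * (1 / ((ψ (χ n) : ℝ) + 1)))) Filter.atTop
          (nhds 0) := by
        have h1 := (tendsto_one_div_add_atTop_nhds_zero_nat (𝕜 := ℝ)).comp
          (hψ.comp hχ).tendsto_atTop
        simpa using (h1.const_mul r).const_mul 2
      -- limits of points of the continua lie in the limit plane
      have hplane : ∀ (x : ℕ → E) (x' : E), (∀ n, x n ∈ Y (ψ (χ n))) →
          Filter.Tendsto x Filter.atTop (nhds x') → x' = ⟪u, x'⟫ • u + ⟪e, x'⟫ • e := by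
        intro x x' hxY hx
        choose φ hφ using fun n => hYn _ _ (hxY n)
        have h1 : Filter.Tendsto (fun n => x n - circ u (e' (ψ (χ n))) (φ n)) Filter.atTop
            (nhds 0) := squeeze_zero_norm hφ hrad
        have h2 : Filter.Tendsto (fun n => circ u (e' (ψ (χ n))) (φ n)) Filter.atTop
            (nhds x') := by simpa using hx.sub h1
        have h3 := (((tendsto_const_nhds (x := u)).inner (𝕜 := ℝ) h2).smul_const u).add
          ((hlime.inner (𝕜 := ℝ) h2).smul hlime)
        refine tendsto_nhds_unique h2 (h3.congr fun n => ?_)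
        have heu' : ⟪e' (ψ (χ n)), u⟫ = 0 := by rw [real_inner_comm, hue']
        simp [circ, inner_add_right, inner_smul_right, hnu, he', hue', heu']
      have hy1 := hplane _ y' (fun n => hyY (χ n)) hlimy
      have hcontr : Continuous fun x => hypRefl a x :=
        continuous_hypRefl.comp (continuous_const.prodMk continuous_id)
      have hy2 := hplane _ (hypRefl a y') (fun n => hay (χ n)) ((hcontr.tendsto y').comp hlimy)
      have huy' : ⟪u, y'⟫ = 0 := by
        refine tendsto_nhds_unique (tendsto_const_nhds.inner (𝕜 := ℝ) hlimy) ?_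
        simp [huy]
      have hny' : ‖y'‖ = 1 := by simpa using hy'
      set β := ⟪e, y'⟫ with hβ
      rw [huy', zero_smul, zero_add] at hy1
      have hβ0 : β ≠ 0 := by
        intro h0; rw [h0, zero_smul] at hy1; rw [hy1] at hny'; simp at hny'
      set k := 2 * (β * ⟪e, a⟫) with hk
      have hk0 : k ≠ 0 := by positivity
      have hay' : hypRefl a y' = β • e - k • a := by
        rw [hypRefl, hy1, inner_smul_right, real_inner_comm]
      rw [hay', inner_sub_right, inner_sub_right, inner_smul_right, inner_smul_right,
        inner_smul_right, inner_smul_right, hue, hee] at hy2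
      apply hapl
      have h4 : k • a = k • (⟪u, a⟫ • u + ⟪e, a⟫ • e) := by
        rw [show k • a = β • e - (β • e - k • a) by module, hy2]; module
      exact smul_right_injective E hk0 h4
    have : CompactSpace X := isCompact_iff_compactSpace.1 hXcomp
    have : CompactSpace (Y n) := isCompact_iff_compactSpace.1 (hYcomp n)
    have : PreconnectedSpace X := isPreconnected_iff_preconnectedSpace.1 hXc
    have : PreconnectedSpace (Y n) := isPreconnected_iff_preconnectedSpace.1 (hYc n)
    obtain ⟨y₁, hy₁Y, hy₁⟩ := hYneg n
    have hru : ∀ c ∈ X, ⟪hypRefl c u, u⟫ ≤ -(1 / 2) := by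
      intro c hc
      have := hXu c hc
      rw [hypRefl, inner_sub_left, inner_smul_left, huu, real_inner_comm u c,
        RCLike.conj_to_real]
      nlinarith
    have hW : Continuous fun p : X × Y n => hypRefl (p.1 : E) (p.2 : E) :=
      continuous_hypRefl.comp
        ((continuous_subtype_val.comp continuous_fst).prodMk
          (continuous_subtype_val.comp continuous_snd))
    obtain ⟨K, hK, hKc, hKf, ⟨p, hpK, hp⟩, q, hqK, hq⟩ := exists_zero_continuum
      (fun p : X × Y n => -⟪u, hypRefl (p.1 : E) (p.2 : E)⟫) (continuous_const.inner hW).neg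
      ⟨u, huY n⟩ ⟨y₁, hy₁Y⟩ (by
        intro c
        have := hru c c.2
        rw [inner_hypRefl_left] at this
        simp only
        linarith) (by
        intro c
        have h1 := hru c c.2
        have h2 : |⟪hypRefl (c : E) u, y₁ + u⟫| ≤ 1 * (1 / 4) := by
          refine (abs_real_inner_le_norm _ _).trans ?_
          rw [norm_hypRefl (hD.unit _ (hXD c.2)), hnu]
          gcongr
        have h3 := (abs_le.1 h2).1
        rw [inner_add_right] at h3
        simp only
        rw [← inner_hypRefl_left]
        linarith) ⟨u, huX⟩ ⟨a, haX⟩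
    refine ⟨u, hCD huC, (fun p : X × Y n => hypRefl (p.1 : E) (p.2 : E)) '' K, ?_, hK.image hW,
      hKc.image _ hW.continuousOn, ⟨_, ⟨p, hpK, rfl⟩, _, ⟨q, hqK, rfl⟩, ?_⟩, ?_⟩
    · rintro _ ⟨s, -, rfl⟩
      exact hD.refl _ (hXD s.1.2) _ (hYD n s.2.2)
    · intro heq
      simp only [hp, hq] at heq
      have hpf := hKf p hpK
      simp only [hp, neg_eq_zero] at hpf
      rw [← inner_hypRefl_left, hypRefl_self hnu, inner_neg_left, neg_eq_zero] at hpf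
      have h1 : hypRefl u (p.2 : E) = p.2 := by simp [hypRefl, hpf]
      rw [h1] at heq
      refine hn p.2 p.2.2 hpf ?_
      rw [heq, hypRefl_hypRefl hna]
      exact q.2.2
    · rintro _ ⟨s, hs, rfl⟩
      simpa using hKf s hs
  · left
    push Not at hcase
    refine ⟨u, e, hCD huC, hne, hue, ?_⟩
    have h1 : Filter.Tendsto (fun n => ⟪e, (e' ∘ ψ) n⟫) Filter.atTop (nhds 1) :=
      hee ▸ tendsto_const_nhds.inner (𝕜 := ℝ) hlim
    obtain ⟨n, hn⟩ := (h1.eventually (lt_mem_nhds zero_lt_one)).exists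
    obtain ⟨c, s, hs, hvn⟩ := hv (ψ n)
    have heu : ⟪e, u⟫ = 0 := by rw [real_inner_comm, hue]
    have ht0 : 0 < ⟪e, v (ψ n)⟫ := by
      rw [hvn, inner_add_right, inner_smul_right, inner_smul_right, heu, mul_zero, zero_add]
      exact mul_pos hs hn
    have ht1 : ⟪e, v (ψ n)⟫ ≤ 1 := by
      have := real_inner_le_norm e (v (ψ n))
      rwa [hne, hD.unit _ (hXD (hvX _)), one_mul] at this
    refine hD.circ_mem_of_heights (hCD huC) hne hue ht0 (by norm_num) ht1 ?_
    intro τ hτ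
    obtain ⟨x, hxX, hx⟩ := hXc.intermediate_value huX (hvX (ψ n))
      (f := fun x => ⟪e, x⟫) (by fun_prop) (show τ ∈ Set.Icc ⟪e, u⟫ _ from
        ⟨by rw [heu]; exact hτ.1.le, hτ.2.le⟩)
    simp only at hx
    have hxp := hcase x hxX (by rw [hx]; exact hτ.1.ne')
    have hnx : ⟪x, x⟫ = 1 := by
      rw [real_inner_self_eq_norm_sq, hD.unit x (hXD hxX)]; norm_num
    have hsq : ⟪u, x⟫ ^ 2 + τ ^ 2 = 1 := by
      rw [← hnx]
      conv_rhs => rw [hxp]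
      simp only [inner_add_left, inner_smul_left, inner_add_right, inner_smul_right,
        RCLike.conj_to_real, hx, huu, hue, heu, hee]
      ring
    have hux : √(1 - τ ^ 2) = ⟪u, x⟫ := by
      rw [← hsq, add_sub_cancel_right, Real.sqrt_sq (by linarith [hXu x hxX])]
    rw [hux, ← hx, ← hxp]
    exact hXD hxX

/-- Induction on the dimension of a subspace `V` containing `D`: the descent of
`ReflClosed.circle_or_descent` replaces `V` by `V ∩ u^⊥`. -/
theorem ReflClosed.exists_circle [FiniteDimensional ℝ E] (V : Submodule ℝ E) :
    ∀ {D : Set E}, ReflClosed D → D ⊆ V → ∀ {C : Set E}, C ⊆ D → IsCompact C →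
      IsPreconnected C → C.Nontrivial →
      ∃ u e : E, u ∈ D ∧ ‖e‖ = 1 ∧ ⟪u, e⟫ = 0 ∧ ∀ φ, circ u e φ ∈ D := by
  induction V using WellFoundedLT.induction with
  | ind V ih =>
    intro D hD hDV C hCD hC hCc hCn
    rcases hD.circle_or_descent hCD hC hCc hCn with h | ⟨u, hu, C', hC'D, hC', hC'c, hC'n, hC'u⟩
    · exact h
    set D' : Set E := {x | x ∈ D ∧ ⟪u, x⟫ = 0} with hD'
    have hD'r : ReflClosed D' := by
      refine ⟨fun x hx => hD.unit x hx.1, fun x hx y hy => ⟨hD.refl x hx.1 y hy.1, ?_⟩⟩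
      simp [hypRefl, inner_sub_right, inner_smul_right, hx.2, hy.2]
    have hlt : V ⊓ (ℝ ∙ u)ᗮ < V := by
      refine lt_of_le_of_ne inf_le_left fun heq => ?_
      have hm : u ∈ V ⊓ (ℝ ∙ u)ᗮ := heq.symm ▸ hDV hu
      have h0 := Submodule.mem_orthogonal_singleton_iff_inner_right.1 hm.2
      rw [real_inner_self_eq_norm_sq, hD.unit u hu] at h0
      norm_num at h0
    obtain ⟨x, e, hx, he, hxe, hφ⟩ := ih _ hlt hD'r
      (fun x hx => ⟨hDV hx.1, Submodule.mem_orthogonal_singleton_iff_inner_right.2 hx.2⟩)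
      (fun x hx => ⟨hC'D hx, hC'u x hx⟩) hC' hC'c hC'n
    exact ⟨x, e, hx.1, he, hxe, fun φ => (hφ φ).1⟩

/-! ### Growing the sphere contained in the set -/

theorem exists_angle {a b : ℝ} (h : a ^ 2 + b ^ 2 = 1) :
    ∃ φ ∈ Set.Icc (-Real.pi) Real.pi, Real.cos φ = a ∧ Real.sin φ = b := by
  have hn : ‖(⟨a, b⟩ : ℂ)‖ = 1 := by
    have h1 : ‖(⟨a, b⟩ : ℂ)‖ ^ 2 = 1 := by
      rw [← Complex.normSq_eq_norm_sq, Complex.normSq_mk]; linarith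
    exact (pow_eq_one_iff_of_nonneg (norm_nonneg _) two_ne_zero).1 h1
  refine ⟨Complex.arg ⟨a, b⟩, ⟨(Complex.neg_pi_lt_arg _).le, Complex.arg_le_pi _⟩, ?_, ?_⟩
  · have := Complex.norm_mul_cos_arg (⟨a, b⟩ : ℂ)
    rwa [hn, one_mul] at this
  · have := Complex.norm_mul_sin_arg (⟨a, b⟩ : ℂ)
    rwa [hn, one_mul] at this

/-- If `D` contains the unit sphere of `V` (of dimension at least two) and a vector `c` neither
in `V` nor orthogonal to it, then it contains the unit sphere of `V + ℝ c`. The orbit of `c` under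
the rotations of `V` is a latitude sphere over `V`, reflecting this latitude in its own
members sweeps out an interval of latitudes, hence an arc of a great circle through the pole, and
an arc generates the whole circle. -/
theorem ReflClosed.sphere_sup_span [FiniteDimensional ℝ E] {D : Set E} (hD : ReflClosed D)
    {V : Submodule ℝ E} (hV : ∀ x ∈ V, ‖x‖ = 1 → x ∈ D) {q r : E} (hq : q ∈ V) (hr : r ∈ V)
    (hnq : ‖q‖ = 1) (hnr : ‖r‖ = 1) (hqr : ⟪q, r⟫ = 0) {c : E} (hc : c ∈ D) (hcV : c ∉ V)
    (hcV' : c ∉ Vᗮ) : ∀ w ∈ V ⊔ ℝ ∙ c, ‖w‖ = 1 → w ∈ D := by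
  obtain ⟨y₀, hy₀, z₀, hz₀, hcyz⟩ := V.exists_add_mem_mem_orthogonal c
  have hy₀0 : y₀ ≠ 0 := by
    rintro rfl; rw [zero_add] at hcyz; exact hcV' (hcyz ▸ hz₀)
  have hz₀0 : z₀ ≠ 0 := by
    rintro rfl; rw [add_zero] at hcyz; exact hcV (hcyz ▸ hy₀)
  set α := ‖y₀‖ with hα
  set β := ‖z₀‖ with hβ
  have hα0 : 0 < α := norm_pos_iff.2 hy₀0
  have hβ0 : 0 < β := norm_pos_iff.2 hz₀0
  set n := β⁻¹ • z₀ with hn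
  have hnn : ‖n‖ = 1 := by
    rw [hn, norm_smul, norm_inv, Real.norm_of_nonneg hβ0.le, inv_mul_cancel₀ hβ0.ne']
  have hzn : z₀ = β • n := by rw [hn, smul_smul, mul_inv_cancel₀ hβ0.ne', one_smul]
  have hVn : ∀ y ∈ V, ⟪y, n⟫ = 0 := by
    intro y hy
    rw [hn, inner_smul_right, (Submodule.mem_orthogonal V z₀).1 hz₀ y hy, mul_zero]
  have hnorm : ∀ y ∈ V, ∀ τ : ℝ, ‖y + τ • n‖ ^ 2 = ‖y‖ ^ 2 + τ ^ 2 := by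
    intro y hy τ
    rw [norm_add_sq_real, inner_smul_right, hVn y hy, norm_smul, hnn, mul_one,
      Real.norm_eq_abs, sq_abs]
    ring
  have hαβ : α ^ 2 + β ^ 2 = 1 := by
    have := hnorm y₀ hy₀ β
    rw [← hzn, ← hcyz, hD.unit c hc] at this
    linarith
  -- only the height of a vector over `V` matters for membership in `D`
  have hrot : ∀ y ∈ V, ∀ y' ∈ V, ∀ τ : ℝ, ‖y‖ = ‖y'‖ → y + τ • n ∈ D → y' + τ • n ∈ D := by
    intro y hy y' hy' τ hyy hm
    by_cases hne : y = y'
    · rwa [← hne]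
    have h0 : ‖y - y'‖ ≠ 0 := norm_ne_zero_iff.2 (sub_ne_zero.2 hne)
    set v := ‖y - y'‖⁻¹ • (y - y') with hv
    have hvV : v ∈ V := V.smul_mem _ (V.sub_mem hy hy')
    have hnv : ‖v‖ = 1 := by
      rw [hv, norm_smul, norm_inv, norm_norm, inv_mul_cancel₀ h0]
    have h1 := hypRefl_sub_normalized hyy hne
    have h2 : hypRefl v (y + τ • n) = y' + τ • n := by
      rw [← h1, ← hv]
      simp only [hypRefl, inner_add_right, inner_smul_right, hVn v hvV]
      module
    exact h2 ▸ hD.refl v (hV v hvV hnv) _ hm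
  have hcirc : ∀ t, ‖α • circ q r t‖ = α := by
    intro t
    have : ‖circ q r t‖ ^ 2 = 1 := by
      rw [← real_inner_self_eq_norm_sq, inner_circ hnq hnr hqr]; simp
    have : ‖circ q r t‖ = 1 :=
      (pow_eq_one_iff_of_nonneg (norm_nonneg _) two_ne_zero).1 this
    rw [norm_smul, this, Real.norm_of_nonneg hα0.le, mul_one]
  have hcircV : ∀ t, circ q r t ∈ V := fun t => V.add_mem (V.smul_mem _ hq) (V.smul_mem _ hr)
  have hlat : ∀ t, α • circ q r t + β • n ∈ D := by
    intro t
    refine hrot y₀ hy₀ _ (V.smul_mem _ (hcircV t)) β (hcirc t).symm ?_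
    rw [← hzn, ← hcyz]; exact hc
  have hnn' : ⟪n, n⟫ = 1 := by rw [real_inner_self_eq_norm_sq, hnn]; norm_num
  have hheights : ∀ τ ∈ Set.Ioo (-β) (β * (4 * α ^ 2 - 1)), √(1 - τ ^ 2) • q + τ • n ∈ D := by
    intro τ hτ
    -- the cosine of the angle for which the reflected vector has height `τ`
    set κ := (1 - 2 * β ^ 2 - τ / β) / (2 * α ^ 2) with hκ
    have hτβ : τ / β * β = τ := div_mul_cancel₀ _ hβ0.ne'
    have hκ1 : κ ≤ 1 := by
      rw [hκ, div_le_one (by positivity)]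
      have : -1 < τ / β := by rw [lt_div_iff₀ hβ0]; linarith [hτ.1]
      linarith
    have hκ2 : -1 ≤ κ := by
      rw [hκ, le_div_iff₀ (by positivity)]
      have : τ / β < 4 * α ^ 2 - 1 := by rw [div_lt_iff₀ hβ0]; linarith [hτ.2]
      linarith
    have hκα : 2 * α ^ 2 * κ = 1 - 2 * β ^ 2 - τ / β := mul_div_cancel₀ _ (by positivity)
    have hcosκ := Real.cos_arccos hκ2 hκ1
    set t := Real.arccos κ with ht
    have hm := hD.refl _ (hlat 0) _ (hlat t)
    have hin : ⟪α • circ q r 0 + β • n, α • circ q r t + β • n⟫ = α ^ 2 * κ + β ^ 2 := by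
      have e1 := inner_circ hnq hnr hqr 0 t
      rw [zero_sub, Real.cos_neg, hcosκ] at e1
      have e2 := hVn _ (hcircV t)
      have e3 := hVn _ (hcircV 0)
      have e4 : ⟪n, circ q r t⟫ = 0 := by rw [real_inner_comm, e2]
      simp only [inner_add_left, inner_add_right, inner_smul_left, inner_smul_right,
        RCLike.conj_to_real, e1, e3, e4, hnn']
      ring
    have hco : β - 2 * (α ^ 2 * κ + β ^ 2) * β = τ := by
      linear_combination (-β) * hκα + hτβ
    set y := α • circ q r t - (2 * (α ^ 2 * κ + β ^ 2)) • α • circ q r 0 with hy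
    have hyV : y ∈ V := V.sub_mem (V.smul_mem _ (hcircV t))
      (V.smul_mem _ (V.smul_mem _ (hcircV 0)))
    have hform : hypRefl (α • circ q r 0 + β • n) (α • circ q r t + β • n) = y + τ • n := by
      rw [hypRefl, hin, ← hco, hy]; module
    rw [hform] at hm
    have hyn := hnorm y hyV τ
    rw [hD.unit _ hm] at hyn
    refine hrot y hyV _ (V.smul_mem _ hq) τ ?_ hm
    rw [norm_smul, hnq, mul_one, Real.norm_of_nonneg (Real.sqrt_nonneg _),
      show 1 - τ ^ 2 = ‖y‖ ^ 2 by linarith, Real.sqrt_sq (norm_nonneg _)]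
  have hβ1 : β ≤ 1 := by nlinarith
  have hall : ∀ φ, circ q n φ ∈ D := by
    refine hD.circ_mem_of_heights (hV q hq hnq) hnn (hVn q hq) ?_ (by linarith) ?_ hheights
    · nlinarith [mul_pos hβ0 (pow_pos hα0 2)]
    · rw [show α ^ 2 = 1 - β ^ 2 by linarith]
      nlinarith [mul_nonneg (by linarith : (0 : ℝ) ≤ β + 1) (sq_nonneg (2 * β - 1))]
  intro w hw hnw
  obtain ⟨x, hx, z, hz, rfl⟩ := Submodule.mem_sup.1 hw
  obtain ⟨l, rfl⟩ := Submodule.mem_span_singleton.1 hz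
  have hyV : x + l • y₀ ∈ V := V.add_mem hx (V.smul_mem _ hy₀)
  have hform : x + l • c = (x + l • y₀) + (l * β) • n := by rw [hcyz, hzn]; module
  rw [hform] at hnw ⊢
  have hyn := hnorm _ hyV (l * β)
  rw [hnw] at hyn
  obtain ⟨φ, -, hφ1, hφ2⟩ := exists_angle (a := ‖x + l • y₀‖) (b := l * β) (by linarith)
  refine hrot (‖x + l • y₀‖ • q) (V.smul_mem _ hq) _ hyV _ ?_ ?_
  · rw [norm_smul, norm_norm, hnq, mul_one]
  · rw [← hφ2, ← hφ1]; exact hall φ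

/-- A maximal subspace, containing the plane of a great circle in `D`, whose unit sphere lies in `D` is
the whole space. -/
theorem ReflClosed.sphere_subset [FiniteDimensional ℝ E] {D : Set E} (hD : ReflClosed D)
    {C : Set E} (hCD : C ⊆ D) (hC : IsCompact C) (hCc : IsPreconnected C) (hCn : C.Nontrivial)
    (hspan : Submodule.span ℝ C = ⊤) : ∀ x : E, ‖x‖ = 1 → x ∈ D := by
  obtain ⟨u, e, hu, hne, hue, hcirc⟩ :=
    ReflClosed.exists_circle (⊤ : Submodule ℝ E) hD (fun _ _ => trivial) hCD hC hCc hCn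
  have hnu := hD.unit u hu
  have huu : ⟪u, u⟫ = 1 := by rw [real_inner_self_eq_norm_sq, hnu]; norm_num
  obtain ⟨V, ⟨hVD, huV, heV⟩, hmax⟩ := (wellFounded_gt (α := Submodule ℝ E)).has_min
    {V | (∀ x ∈ V, ‖x‖ = 1 → x ∈ D) ∧ u ∈ V ∧ e ∈ V} (by
      refine ⟨Submodule.span ℝ {u, e}, ?_, Submodule.subset_span (by simp),
        Submodule.subset_span (by simp)⟩
      intro x hx hnx
      obtain ⟨a, b, rfl⟩ := Submodule.mem_span_pair.1 hx
      have hee : ⟪e, e⟫ = 1 := by rw [real_inner_self_eq_norm_sq, hne]; norm_num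
      have hab : a ^ 2 + b ^ 2 = 1 := by
        have h1 : ⟪a • u + b • e, a • u + b • e⟫ = 1 := by
          rw [real_inner_self_eq_norm_sq, hnx]; norm_num
        have heu : ⟪e, u⟫ = 0 := by rw [real_inner_comm, hue]
        simp only [inner_add_left, inner_add_right, inner_smul_left, inner_smul_right,
          RCLike.conj_to_real, huu, hee, hue, heu] at h1
        linarith
      obtain ⟨φ, -, hφ1, hφ2⟩ := exists_angle hab
      rw [← hφ1, ← hφ2]
      exact hcirc φ)
  have hclosed : ∀ W : Submodule ℝ E, IsClosed (W : Set E) := fun W =>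
    W.closed_of_finiteDimensional
  by_cases hex : ∃ c ∈ C, c ∉ V ∧ c ∉ Vᗮ
  · obtain ⟨c, hcC, hcV, hcV'⟩ := hex
    exfalso
    refine hmax (V ⊔ ℝ ∙ c) ⟨hD.sphere_sup_span hVD huV heV hnu hne hue (hCD hcC) hcV hcV',
      Submodule.mem_sup_left huV, Submodule.mem_sup_left heV⟩ ?_
    refine lt_of_le_of_ne le_sup_left fun heq => hcV ?_
    rw [heq]
    exact Submodule.mem_sup_right (Submodule.mem_span_singleton_self c)
  · push Not at hex
    suffices hCV : C ⊆ V by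
      have : V = ⊤ := top_le_iff.1 (hspan ▸ Submodule.span_le.2 hCV)
      exact fun x hx => hVD x (this ▸ trivial) hx
    by_contra hnot
    obtain ⟨c, hcC, hcV⟩ := Set.not_subset.1 hnot
    have hCV' : C ⊆ Vᗮ := by
      intro d hd
      by_contra hdV
      have hdV' : d ∈ V := by
        by_contra h; exact hdV (hex d hd h)
      obtain ⟨x, hxC, hxV, hxV'⟩ := isPreconnected_closed_iff.1 hCc _ _ (hclosed V) (hclosed Vᗮ)
        (fun x hx => or_iff_not_imp_left.2 (hex x hx)) ⟨d, hd, hdV'⟩ ⟨c, hcC, hex c hcC hcV⟩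
      have h0 := (Submodule.mem_orthogonal V x).1 hxV' x hxV
      rw [real_inner_self_eq_norm_sq, hD.unit x (hCD hxC)] at h0
      norm_num at h0
    have htop : Vᗮ = ⊤ := top_le_iff.1 (hspan ▸ Submodule.span_le.2 hCV')
    have h0 := (Submodule.mem_orthogonal V u).1 (htop ▸ trivial) u huV
    rw [huu] at h0
    norm_num at h0

end Geometry

/-! ### Reflection matrices and the circle -/

section Matrices

open scoped RealInnerProductSpace

theorem reflMat_mulVec {n : ℕ} (u x : Fin n → ℝ) :
    reflMat u *ᵥ x = x - (2 * (u ⬝ᵥ x)) • u := by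
  simp only [reflMat, sub_mulVec, one_mulVec, smul_mulVec, vecMulVec_mulVec]
  ext i
  simp [mul_assoc, mul_comm]

theorem reflMat_transpose {n : ℕ} (u : Fin n → ℝ) : (reflMat u)ᵀ = reflMat u := by
  simp [reflMat, transpose_vecMulVec]

theorem inner_toLp {n : ℕ} (u v : EuclideanSpace ℝ (Fin n)) :
    ⟪u, v⟫ = WithLp.ofLp u ⬝ᵥ WithLp.ofLp v := by
  rw [EuclideanSpace.inner_eq_star_dotProduct, star_trivial, dotProduct_comm]

theorem norm_eq_one_iff_dotProduct {n : ℕ} (u : EuclideanSpace ℝ (Fin n)) :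
    ‖u‖ = 1 ↔ WithLp.ofLp u ⬝ᵥ WithLp.ofLp u = 1 := by
  rw [← inner_toLp, real_inner_self_eq_norm_sq,
    pow_eq_one_iff_of_nonneg (norm_nonneg _) two_ne_zero]

theorem ofLp_hypRefl {n : ℕ} (u x : EuclideanSpace ℝ (Fin n)) :
    WithLp.ofLp (hypRefl u x) = reflMat (WithLp.ofLp u) *ᵥ WithLp.ofLp x := by
  rw [reflMat_mulVec, hypRefl, inner_toLp]; simp

theorem reflMat_mul_self {n : ℕ} {u : Fin n → ℝ} (hu : u ⬝ᵥ u = 1) :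
    reflMat u * reflMat u = 1 := by
  simp only [reflMat, sub_mul, mul_sub, one_mul, mul_one, smul_mul_assoc, mul_smul_comm,
    vecMulVec_mul_vecMulVec, hu, one_smul]
  module

theorem reflMat_mem_orthogonalGroup {n : ℕ} {u : Fin n → ℝ} (hu : u ⬝ᵥ u = 1) :
    reflMat u ∈ Matrix.orthogonalGroup (Fin n) ℝ := by
  rw [mem_orthogonalGroup_iff, reflMat_transpose, reflMat_mul_self hu]

/-- Conjugating the reflection in `v` by the reflection in `u` gives the reflection in the
image of `v`. -/
theorem reflMat_conj {n : ℕ} {u : Fin n → ℝ} (hu : u ⬝ᵥ u = 1) (v : Fin n → ℝ) :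
    reflMat u * reflMat v * reflMat u = reflMat (reflMat u *ᵥ v) := by
  have h : v ᵥ* reflMat u = reflMat u *ᵥ v := by
    rw [← vecMul_transpose, reflMat_transpose]
  conv_lhs => rw [show reflMat v = 1 - (2 : ℝ) • vecMulVec v v from rfl]
  rw [mul_sub, sub_mul, mul_one, reflMat_mul_self hu, mul_smul_comm, smul_mul_assoc,
    mul_vecMulVec, vecMulVec_mul, h]
  rfl

/-- The unit vectors whose reflections belong to a subgroup `H` of the orthogonal group form a
set stable under its own reflections, because `H` is stable under conjugation by its members. -/
theorem reflClosed_of_subgroup {n : ℕ} (H : Subgroup (Matrix.orthogonalGroup (Fin n) ℝ)) :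
    ReflClosed {v : EuclideanSpace ℝ (Fin n) | ‖v‖ = 1 ∧
      ∃ g ∈ H, (g : Matrix (Fin n) (Fin n) ℝ) = reflMat (WithLp.ofLp v)} := by
  refine ⟨fun u hu => hu.1, ?_⟩
  rintro u ⟨hu, g, hg, hgu⟩ v ⟨hv, h, hh, hhv⟩
  refine ⟨by rw [norm_hypRefl hu, hv], g * h * g, H.mul_mem (H.mul_mem hg hh) hg, ?_⟩
  rw [ofLp_hypRefl, ← reflMat_conj ((norm_eq_one_iff_dotProduct u).1 hu), ← hgu, ← hhv]
  rfl

/-- The circle is a continuous image of an interval. -/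
theorem circle_compact_connected :
    CompactSpace {x : Fin 2 → ℝ // x ⬝ᵥ x = 1} ∧
      PreconnectedSpace {x : Fin 2 → ℝ // x ⬝ᵥ x = 1} := by
  set p : ℝ → {x : Fin 2 → ℝ // x ⬝ᵥ x = 1} := fun t => ⟨![Real.cos t, Real.sin t], by
    simp only [dotProduct, Fin.sum_univ_two, cons_val_zero, cons_val_one]
    linarith [Real.cos_sq_add_sin_sq t]⟩ with hp
  have hcont : Continuous p := by
    refine Continuous.subtype_mk (continuous_pi fun i => ?_) _
    fin_cases i
    · exact Real.continuous_cos
    · exact Real.continuous_sin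
  have hsurj : p '' Set.Icc (-Real.pi) Real.pi = Set.univ := by
    refine Set.eq_univ_of_forall fun x => ?_
    have hx := x.2
    simp only [dotProduct, Fin.sum_univ_two] at hx
    obtain ⟨φ, hφ, h1, h2⟩ := exists_angle (a := x.1 0) (b := x.1 1) (by linarith)
    refine ⟨φ, hφ, Subtype.ext (funext fun i => ?_)⟩
    fin_cases i
    · exact h1
    · exact h2
  exact ⟨⟨hsurj ▸ isCompact_Icc.image hcont⟩,
    ⟨hsurj ▸ isPreconnected_Icc.image _ hcont.continuousOn⟩⟩

end Matrices

/-- If `μ : S¹ → S³` is continuous and its image spans `ℝ⁴`, then the subgroup of O(4)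
generated by the reflections `I − 2μ(ψ)⊗μ(ψ)` acts transitively on `S³`. -/
theorem stmt_12 (μ : {x : Fin 2 → ℝ // x ⬝ᵥ x = 1} → (Fin 4 → ℝ))
    (hcont : Continuous μ)
    (hunit : ∀ a, μ a ⬝ᵥ μ a = 1)
    (hspan : Submodule.span ℝ (Set.range μ) = ⊤) :
    ∀ x y : Fin 4 → ℝ, x ⬝ᵥ x = 1 → y ⬝ᵥ y = 1 →
      ∃ g ∈ Subgroup.closure
          {g : Matrix.orthogonalGroup (Fin 4) ℝ |
            ∃ a, (g : Matrix (Fin 4) (Fin 4) ℝ) = reflMat (μ a)},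
        (g : Matrix (Fin 4) (Fin 4) ℝ) *ᵥ x = y := by
  intro x y hx hy
  set H := Subgroup.closure
    {g : Matrix.orthogonalGroup (Fin 4) ℝ | ∃ a, (g : Matrix (Fin 4) (Fin 4) ℝ) = reflMat (μ a)}
    with hH
  have hDr := reflClosed_of_subgroup H
  set D := {v : EuclideanSpace ℝ (Fin 4) | ‖v‖ = 1 ∧
      ∃ g ∈ H, (g : Matrix (Fin 4) (Fin 4) ℝ) = reflMat (WithLp.ofLp v)} with hD
  set C : Set (EuclideanSpace ℝ (Fin 4)) := Set.range fun a => WithLp.toLp 2 (μ a) with hC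
  obtain ⟨hcomp, hconn⟩ := circle_compact_connected
  have hcont' : Continuous fun a => WithLp.toLp 2 (μ a) :=
    (PiLp.continuous_toLp 2 fun _ : Fin 4 => ℝ).comp hcont
  have hCD : C ⊆ D := by
    rintro _ ⟨a, rfl⟩
    exact ⟨(norm_eq_one_iff_dotProduct _).2 (hunit a),
      ⟨_, reflMat_mem_orthogonalGroup (hunit a)⟩, Subgroup.subset_closure ⟨a, rfl⟩, rfl⟩
  have hCspan : Submodule.span ℝ C = ⊤ := by
    have h1 : C = (WithLp.linearEquiv 2 ℝ (Fin 4 → ℝ)).symm.toLinearMap '' Set.range μ := by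
      rw [← Set.range_comp]; rfl
    rw [h1, Submodule.span_image, hspan, Submodule.map_top, LinearEquiv.range]
  have hCn : C.Nontrivial := by
    by_contra hnot
    rw [Set.not_nontrivial_iff] at hnot
    have hle : Module.finrank ℝ (Submodule.span ℝ C) ≤ 1 := by
      rcases hnot.eq_empty_or_singleton with h | ⟨v, h⟩
      · rw [h, Submodule.span_empty, finrank_bot]; exact zero_le_one
      · rw [h]; exact (finrank_span_le_card {v}).trans (by simp)
    rw [hCspan, finrank_top, finrank_euclideanSpace_fin] at hle
    norm_num at hle
  have hall := hDr.sphere_subset hCD (isCompact_range hcont') (isPreconnected_range hcont') hCn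
    hCspan
  by_cases hxy : x = y
  · exact ⟨1, H.one_mem, by simp [hxy]⟩
  have hne : (WithLp.toLp 2 x : EuclideanSpace ℝ (Fin 4)) ≠ WithLp.toLp 2 y :=
    fun h => hxy (WithLp.toLp_injective 2 h)
  have hnx : ‖(WithLp.toLp 2 x : EuclideanSpace ℝ (Fin 4))‖ = 1 :=
    (norm_eq_one_iff_dotProduct _).2 hx
  have hny : ‖(WithLp.toLp 2 y : EuclideanSpace ℝ (Fin 4))‖ = 1 :=
    (norm_eq_one_iff_dotProduct _).2 hy
  have hswap := hypRefl_sub_normalized (hnx.trans hny.symm) hne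
  obtain ⟨-, g, hg, hgv⟩ := hall _ (norm_smul_inv_norm (𝕜 := ℝ) (sub_ne_zero.2 hne))
  refine ⟨g, hg, ?_⟩
  rw [hgv]
  have h := congrArg WithLp.ofLp hswap
  rw [ofLp_hypRefl] at h
  exact h
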